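/- Let K be a finite field, let U₂, U₁, U₀ be finite-dimensional K-vector spaces, and let B : U₂ →ₗ[K] U₁ →ₗ[K] U₀ be a K-bilinear map. Then card L(B)^× · card M(B)^× · card R(B)^× ≤ card Aut(B) · card C(B)^×; that is, the cardinality of the autotopism group of B is at least the cardinality of the unit group of T(B) = L(B) ⊕ M(B) ⊕ R(B) divided by the cardinality of the unit group of the centroid C(B). -/

import Mathlib

/-!
Identify a unit `(f, h)` of `L(B)` with the autotopism `(f, 1, h)`, a unit `(f, g)` of `M(B)` with
`(f, g⁻¹, 1)` and a unit `(g, h)` of `R(B)` with `(1, g, h)`. The three unit groups thus become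
the kernels, in `Aut(B)`, of the actions on `U₁`, `U₀` and `U₂`, and `C(B)ˣ` becomes the fibre
product of `L(B)ˣ` and `R(B)ˣ` over the action on `U₀`. In any group, for a subgroup `H`, a normal
subgroup `N` and a homomorphism `φ`, applying the product formula `|H| |N| = |HN| |H ∩ N|` first to
`H`, `ker φ` and then to `H (ker φ)`, `N` shows that `|H| |ker φ| |N|` is the order of `H (ker φ) N`
times that of the fibre product of `H` and `N` over `φ`. Hence
`|L(B)ˣ| |M(B)ˣ| |R(B)ˣ| = |L(B)ˣ M(B)ˣ R(B)ˣ| |C(B)ˣ|`, where the product set on the right is a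
subgroup of `Aut(B)`.
-/

section FiberProduct

variable {G A : Type*} [Group G] [Group A]

theorem card_inf_mul_relIndex (H N : Subgroup G) :
    Nat.card ↥(H ⊓ N) * N.relIndex H = Nat.card H := by
  simpa only [Subgroup.relIndex_bot_left, Subgroup.inf_relIndex_left] using
    Subgroup.relIndex_mul_relIndex ⊥ (H ⊓ N) H bot_le inf_le_left

theorem card_mul_card_eq_card_sup_mul_card_inf (H N : Subgroup G) [N.Normal] :
    Nat.card H * Nat.card N = Nat.card ↥(H ⊔ N) * Nat.card ↥(H ⊓ N) := by
  have card_sup : Nat.card N * N.relIndex H = Nat.card ↥(H ⊔ N) := by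
    simpa only [inf_of_le_right (le_sup_right : N ≤ H ⊔ N), Subgroup.relIndex_sup_right] using
      card_inf_mul_relIndex (H ⊔ N) N
  rw [← card_inf_mul_relIndex H N, ← card_sup]
  ring

/-- The fibre product of two subgroups `H` and `N` of `G` over a homomorphism `φ` out of `G`. -/
def fiberProduct (φ : G →* A) (H N : Subgroup G) : Subgroup (H × N) :=
  ((φ.comp H.subtype).comp (MonoidHom.fst H N)).eqLocus
    ((φ.comp N.subtype).comp (MonoidHom.snd H N))

theorem mem_fiberProduct {φ : G →* A} {H N : Subgroup G} {x : H × N} :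
    x ∈ fiberProduct φ H N ↔ φ x.1 = φ x.2 :=
  Iff.rfl

theorem map_snd_fiberProduct (φ : G →* A) (H N : Subgroup G) :
    (fiberProduct φ H N).map (N.subtype.comp (MonoidHom.snd H N)) = (H ⊔ φ.ker) ⊓ N := by
  ext n
  rw [← Subgroup.comap_map_eq]
  constructor
  · rintro ⟨⟨h, n⟩, heq, rfl⟩
    exact ⟨⟨h, h.2, heq⟩, n.2⟩
  · rintro ⟨⟨h, hh, heq⟩, hn⟩
    exact ⟨(⟨h, hh⟩, ⟨n, hn⟩), heq, rfl⟩

theorem fiberProduct_inf_ker_snd (φ : G →* A) (H N : Subgroup G) :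
    fiberProduct φ H N ⊓ (N.subtype.comp (MonoidHom.snd H N)).ker =
      (φ.ker.subgroupOf H).map (MonoidHom.inl H N) := by
  ext ⟨h, n⟩
  constructor
  · rintro ⟨heq, hn⟩
    obtain rfl : n = 1 := Subtype.ext hn
    exact ⟨h, heq.trans (map_one φ), rfl⟩
  · rintro ⟨h, hh, ⟨⟩⟩
    exact ⟨Eq.trans hh (map_one φ).symm, rfl⟩

theorem card_fiberProduct (φ : G →* A) (H N : Subgroup G) :
    Nat.card (fiberProduct φ H N) = Nat.card ↥(H ⊓ φ.ker) * Nat.card ↥((H ⊔ φ.ker) ⊓ N) := by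
  have inl_injective : Function.Injective (MonoidHom.inl H N) := fun _ _ h => congrArg Prod.fst h
  have card_kernel :
      Nat.card ↥((φ.ker.subgroupOf H).map (MonoidHom.inl H N)) = Nat.card ↥(H ⊓ φ.ker) := by
    rw [Subgroup.card_map_of_injective inl_injective, inf_comm, ← Subgroup.subgroupOf_map_subtype,
      Subgroup.card_map_of_injective H.subtype_injective]
  rw [← card_inf_mul_relIndex _ (N.subtype.comp (MonoidHom.snd H N)).ker, Subgroup.relIndex_ker,
    map_snd_fiberProduct, fiberProduct_inf_ker_snd, card_kernel]

theorem card_mul_card_ker_mul_card (φ : G →* A) (H N : Subgroup G) [N.Normal] :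
    Nat.card H * Nat.card φ.ker * Nat.card N =
      Nat.card ↥(H ⊔ φ.ker ⊔ N) * Nat.card (fiberProduct φ H N) := by
  calc Nat.card H * Nat.card φ.ker * Nat.card N
    _ = Nat.card ↥(H ⊔ φ.ker) * Nat.card N * Nat.card ↥(H ⊓ φ.ker) := by
      rw [card_mul_card_eq_card_sup_mul_card_inf H φ.ker, mul_right_comm]
    _ = Nat.card ↥(H ⊔ φ.ker ⊔ N) * Nat.card ↥((H ⊔ φ.ker) ⊓ N) * Nat.card ↥(H ⊓ φ.ker) := by
      rw [card_mul_card_eq_card_sup_mul_card_inf (H ⊔ φ.ker) N]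
    _ = Nat.card ↥(H ⊔ φ.ker ⊔ N) * Nat.card (fiberProduct φ H N) := by
      rw [card_fiberProduct, mul_assoc, mul_comm (Nat.card ↥(_ ⊓ N))]

end FiberProduct

section Autotopism

variable {K U₂ U₁ U₀ : Type*} [CommSemiring K]
  [AddCommMonoid U₂] [Module K U₂] [AddCommMonoid U₁] [Module K U₁] [AddCommMonoid U₀] [Module K U₀]
  (B : U₂ →ₗ[K] U₁ →ₗ[K] U₀)

/-- The autotopism group `Aut(B)`, under componentwise composition. -/
def autotopismGroup : Subgroup ((U₂ ≃ₗ[K] U₂) × (U₁ ≃ₗ[K] U₁) × (U₀ ≃ₗ[K] U₀)) where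
  carrier := {f | ∀ u₂ u₁, B (f.1 u₂) (f.2.1 u₁) = f.2.2 (B u₂ u₁)}
  mul_mem' hf hg u₂ u₁ := (hf _ _).trans (congrArg _ (hg u₂ u₁))
  one_mem' _ _ := rfl
  inv_mem' {f} hf u₂ u₁ := (LinearEquiv.eq_symm_apply f.2.2).2 <| by
    rw [← hf]
    exact congrArg₂ (B · ·) (f.1.apply_symm_apply u₂) (f.2.1.apply_symm_apply u₁)

namespace autotopismGroup

/-- The action of `Aut(B)` on `U₂`. -/
def action₂ : autotopismGroup B →* (U₂ ≃ₗ[K] U₂) :=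
  (MonoidHom.fst _ _).comp (autotopismGroup B).subtype

/-- The action of `Aut(B)` on `U₁`. -/
def action₁ : autotopismGroup B →* (U₁ ≃ₗ[K] U₁) :=
  ((MonoidHom.fst _ _).comp (MonoidHom.snd _ _)).comp (autotopismGroup B).subtype

/-- The action of `Aut(B)` on `U₀`. -/
def action₀ : autotopismGroup B →* (U₀ ≃ₗ[K] U₀) :=
  ((MonoidHom.snd _ _).comp (MonoidHom.snd _ _)).comp (autotopismGroup B).subtype

theorem map_action (f : autotopismGroup B) (u₂ : U₂) (u₁ : U₁) :
    B (action₂ B f u₂) (action₁ B f u₁) = action₀ B f (B u₂ u₁) :=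
  f.2 u₂ u₁

variable {B} in
theorem ext_action {f g : autotopismGroup B} (h₂ : action₂ B f = action₂ B g)
    (h₁ : action₁ B f = action₁ B g) (h₀ : action₀ B f = action₀ B g) : f = g :=
  Subtype.ext (Prod.ext h₂ (Prod.ext h₁ h₀))

end autotopismGroup

open autotopismGroup

/-- The unit group of the left scalar algebra `L(B)`, a unit `(f, h)` being encoded as the
autotopism `(f, 1, h)`. -/
def leftScalarUnits : Subgroup (autotopismGroup B) :=
  (action₁ B).ker

/-- The unit group of the adjoint algebra `M(B)`, a unit `(f, g)` being encoded as the autotopism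
`(f, g⁻¹, 1)`; inverting `g` accounts for the reversed multiplication of second components. -/
def adjointUnits : Subgroup (autotopismGroup B) :=
  (action₀ B).ker

/-- The unit group of the right scalar algebra `R(B)`, a unit `(g, h)` being encoded as the
autotopism `(1, g, h)`. -/
def rightScalarUnits : Subgroup (autotopismGroup B) :=
  (action₂ B).ker

instance : (rightScalarUnits B).Normal :=
  inferInstanceAs (action₂ B).ker.Normal

/-- The unit group of the centroid `C(B)`, a unit `(f₂, f₁, f₀)` being encoded as the pair of
`(f₂, 1, f₀)`, a unit of `L(B)`, and `(1, f₁, f₀)`, a unit of `R(B)`. -/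
def centroidUnits : Subgroup (leftScalarUnits B × rightScalarUnits B) :=
  fiberProduct (action₀ B) (leftScalarUnits B) (rightScalarUnits B)

theorem map_leftScalarUnits (f : leftScalarUnits B) (u₂ : U₂) (u₁ : U₁) :
    B (action₂ B f u₂) u₁ = action₀ B f (B u₂ u₁) := by
  simpa only [show action₁ B f = 1 from f.2, LinearEquiv.coe_one, id_eq] using map_action B f u₂ u₁

theorem map_rightScalarUnits (f : rightScalarUnits B) (u₂ : U₂) (u₁ : U₁) :
    B u₂ (action₁ B f u₁) = action₀ B f (B u₂ u₁) := by
  simpa only [show action₂ B f = 1 from f.2, LinearEquiv.coe_one, id_eq] using map_action B f u₂ u₁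

theorem map_adjointUnits (f : adjointUnits B) (u₂ : U₂) (u₁ : U₁) :
    B (action₂ B f u₂) u₁ = B u₂ ((action₁ B f)⁻¹ u₁) := by
  simpa only [show action₀ B f = 1 from f.2, LinearEquiv.coe_one, id_eq,
    LinearEquiv.coe_inv, LinearEquiv.apply_symm_apply] using
    map_action B f u₂ ((action₁ B f)⁻¹ u₁)

theorem toLinearMap_mul_toLinearMap_inv {V : Type*} [AddCommMonoid V] [Module K V]
    (e : V ≃ₗ[K] V) : (e : Module.End K V) * (e⁻¹ : V ≃ₗ[K] V) = 1 :=
  LinearMap.ext e.apply_symm_apply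

theorem toLinearMap_inv_mul_toLinearMap {V : Type*} [AddCommMonoid V] [Module K V]
    (e : V ≃ₗ[K] V) : ((e⁻¹ : V ≃ₗ[K] V) : Module.End K V) * e = 1 :=
  LinearMap.ext e.symm_apply_apply

theorem card_leftScalarUnits :
    Nat.card (leftScalarUnits B) =
      Nat.card {p : Module.End K U₂ × Module.End K U₀ //
        (∀ (u₂ : U₂) (u₁ : U₁), B (p.1 u₂) u₁ = p.2 (B u₂ u₁)) ∧
        ∃ q : Module.End K U₂ × Module.End K U₀,
          (∀ (u₂ : U₂) (u₁ : U₁), B (q.1 u₂) u₁ = q.2 (B u₂ u₁)) ∧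
          p.1 * q.1 = 1 ∧ q.1 * p.1 = 1 ∧ p.2 * q.2 = 1 ∧ q.2 * p.2 = 1} := by
  refine Nat.card_eq_of_bijective (fun f => ⟨(action₂ B f, action₀ B f), map_leftScalarUnits B f,
    (action₂ B ↑f⁻¹, action₀ B ↑f⁻¹), map_leftScalarUnits B f⁻¹,
    toLinearMap_mul_toLinearMap_inv _, toLinearMap_inv_mul_toLinearMap _,
    toLinearMap_mul_toLinearMap_inv _, toLinearMap_inv_mul_toLinearMap _⟩)
    ⟨fun f g hfg => ?_, ?_⟩
  · have h₂ : action₂ B f = action₂ B g :=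
      LinearEquiv.toLinearMap_injective (congrArg (·.1.1) hfg)
    have h₀ : action₀ B f = action₀ B g :=
      LinearEquiv.toLinearMap_injective (congrArg (·.1.2) hfg)
    exact Subtype.ext (ext_action h₂ (Eq.trans f.2 (Eq.symm g.2)) h₀)
  · rintro ⟨⟨f, h⟩, hfh, ⟨f', h'⟩, -, hff', hf'f, hhh', hh'h⟩
    exact ⟨⟨⟨(.ofLinearMap f f' hff' hf'f, 1, .ofLinearMap h h' hhh' hh'h), hfh⟩, rfl⟩, rfl⟩

theorem card_adjointUnits :
    Nat.card (adjointUnits B) =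
      Nat.card {p : Module.End K U₂ × Module.End K U₁ //
        (∀ (u₂ : U₂) (u₁ : U₁), B (p.1 u₂) u₁ = B u₂ (p.2 u₁)) ∧
        ∃ q : Module.End K U₂ × Module.End K U₁,
          (∀ (u₂ : U₂) (u₁ : U₁), B (q.1 u₂) u₁ = B u₂ (q.2 u₁)) ∧
          p.1 * q.1 = 1 ∧ q.1 * p.1 = 1 ∧ p.2 * q.2 = 1 ∧ q.2 * p.2 = 1} := by
  refine Nat.card_eq_of_bijective (fun f => ⟨(action₂ B f, action₁ B ↑f⁻¹), map_adjointUnits B f,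
    (action₂ B ↑f⁻¹, action₁ B f), map_adjointUnits B f⁻¹,
    toLinearMap_mul_toLinearMap_inv _, toLinearMap_inv_mul_toLinearMap _,
    toLinearMap_inv_mul_toLinearMap _, toLinearMap_mul_toLinearMap_inv _⟩)
    ⟨fun f g hfg => ?_, ?_⟩
  · have h₂ : action₂ B f = action₂ B g :=
      LinearEquiv.toLinearMap_injective (congrArg (·.1.1) hfg)
    have h₁ : action₁ B f = action₁ B g :=
      inv_injective (LinearEquiv.toLinearMap_injective (congrArg (·.1.2) hfg))
    exact Subtype.ext (ext_action h₂ h₁ (Eq.trans f.2 (Eq.symm g.2)))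
  · rintro ⟨⟨f, g⟩, hfg, ⟨f', g'⟩, -, hff', hf'f, hgg', hg'g⟩
    have map_inv_apply (u₂ : U₂) (u₁ : U₁) : B (f u₂) (g' u₁) = B u₂ u₁ :=
      (hfg u₂ (g' u₁)).trans (congrArg (B u₂) (LinearMap.congr_fun hgg' u₁))
    exact ⟨⟨⟨(.ofLinearMap f f' hff' hf'f, .ofLinearMap g' g hg'g hgg', 1), map_inv_apply⟩, rfl⟩,
      rfl⟩

theorem card_rightScalarUnits :
    Nat.card (rightScalarUnits B) =
      Nat.card {p : Module.End K U₁ × Module.End K U₀ //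
        (∀ (u₂ : U₂) (u₁ : U₁), B u₂ (p.1 u₁) = p.2 (B u₂ u₁)) ∧
        ∃ q : Module.End K U₁ × Module.End K U₀,
          (∀ (u₂ : U₂) (u₁ : U₁), B u₂ (q.1 u₁) = q.2 (B u₂ u₁)) ∧
          p.1 * q.1 = 1 ∧ q.1 * p.1 = 1 ∧ p.2 * q.2 = 1 ∧ q.2 * p.2 = 1} := by
  refine Nat.card_eq_of_bijective (fun f => ⟨(action₁ B f, action₀ B f), map_rightScalarUnits B f,
    (action₁ B ↑f⁻¹, action₀ B ↑f⁻¹), map_rightScalarUnits B f⁻¹,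
    toLinearMap_mul_toLinearMap_inv _, toLinearMap_inv_mul_toLinearMap _,
    toLinearMap_mul_toLinearMap_inv _, toLinearMap_inv_mul_toLinearMap _⟩)
    ⟨fun f g hfg => ?_, ?_⟩
  · have h₁ : action₁ B f = action₁ B g :=
      LinearEquiv.toLinearMap_injective (congrArg (·.1.1) hfg)
    have h₀ : action₀ B f = action₀ B g :=
      LinearEquiv.toLinearMap_injective (congrArg (·.1.2) hfg)
    exact Subtype.ext (ext_action (Eq.trans f.2 (Eq.symm g.2)) h₁ h₀)
  · rintro ⟨⟨g, h⟩, hgh, ⟨g', h'⟩, -, hgg', hg'g, hhh', hh'h⟩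
    exact ⟨⟨⟨(1, .ofLinearMap g g' hgg' hg'g, .ofLinearMap h h' hhh' hh'h), hgh⟩, rfl⟩, rfl⟩

theorem map_centroidUnits (x : centroidUnits B) (u₂ : U₂) (u₁ : U₁) :
    B (action₂ B x.1.1 u₂) u₁ = B u₂ (action₁ B x.1.2 u₁) ∧
      B (action₂ B x.1.1 u₂) u₁ = action₀ B x.1.1 (B u₂ u₁) := by
  have left := map_leftScalarUnits B x.1.1 u₂ u₁
  have right := map_rightScalarUnits B x.1.2 u₂ u₁
  rw [← mem_fiberProduct.1 x.2] at right
  exact ⟨left.trans right.symm, left⟩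

theorem card_centroidUnits :
    Nat.card (centroidUnits B) =
      Nat.card {p : Module.End K U₂ × Module.End K U₁ × Module.End K U₀ //
        (∀ (u₂ : U₂) (u₁ : U₁),
          B (p.1 u₂) u₁ = B u₂ (p.2.1 u₁) ∧ B (p.1 u₂) u₁ = p.2.2 (B u₂ u₁)) ∧
        ∃ q : Module.End K U₂ × Module.End K U₁ × Module.End K U₀,
          (∀ (u₂ : U₂) (u₁ : U₁),
            B (q.1 u₂) u₁ = B u₂ (q.2.1 u₁) ∧ B (q.1 u₂) u₁ = q.2.2 (B u₂ u₁)) ∧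
          p.1 * q.1 = 1 ∧ q.1 * p.1 = 1 ∧
          p.2.1 * q.2.1 = 1 ∧ q.2.1 * p.2.1 = 1 ∧
          p.2.2 * q.2.2 = 1 ∧ q.2.2 * p.2.2 = 1} := by
  refine Nat.card_eq_of_bijective
    (fun x => ⟨(action₂ B x.1.1, action₁ B x.1.2, action₀ B x.1.1), map_centroidUnits B x,
      (action₂ B (x⁻¹).1.1, action₁ B (x⁻¹).1.2, action₀ B (x⁻¹).1.1), map_centroidUnits B x⁻¹,
      toLinearMap_mul_toLinearMap_inv _, toLinearMap_inv_mul_toLinearMap _,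
      toLinearMap_mul_toLinearMap_inv _, toLinearMap_inv_mul_toLinearMap _,
      toLinearMap_mul_toLinearMap_inv _, toLinearMap_inv_mul_toLinearMap _⟩)
    ⟨fun x y hxy => ?_, ?_⟩
  · obtain ⟨⟨l, r⟩, hx⟩ := x
    obtain ⟨⟨l', r'⟩, hy⟩ := y
    have h₂ : action₂ B l = action₂ B l' :=
      LinearEquiv.toLinearMap_injective (congrArg (·.1.1) hxy)
    have h₁ : action₁ B r = action₁ B r' :=
      LinearEquiv.toLinearMap_injective (congrArg (·.1.2.1) hxy)
    have h₀ : action₀ B l = action₀ B l' :=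
      LinearEquiv.toLinearMap_injective (congrArg (·.1.2.2) hxy)
    have hl : l = l' := Subtype.ext (ext_action h₂ (Eq.trans l.2 (Eq.symm l'.2)) h₀)
    have hr : r = r' := Subtype.ext (ext_action (Eq.trans r.2 (Eq.symm r'.2)) h₁
      ((mem_fiberProduct.1 hx).symm.trans (h₀.trans (mem_fiberProduct.1 hy))))
    exact Subtype.ext (Prod.ext hl hr)
  · rintro ⟨⟨f, g, h⟩, hfgh, ⟨f', g', h'⟩, -, hff', hf'f, hgg', hg'g, hhh', hh'h⟩
    let l : leftScalarUnits B :=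
      ⟨⟨(.ofLinearMap f f' hff' hf'f, 1, .ofLinearMap h h' hhh' hh'h),
        fun u₂ u₁ => (hfgh u₂ u₁).2⟩, rfl⟩
    let r : rightScalarUnits B :=
      ⟨⟨(1, .ofLinearMap g g' hgg' hg'g, .ofLinearMap h h' hhh' hh'h),
        fun u₂ u₁ => (hfgh u₂ u₁).1.symm.trans (hfgh u₂ u₁).2⟩, rfl⟩
    exact ⟨⟨(l, r), rfl⟩, rfl⟩

theorem card_units_le_card_autotopism_mul_card_centroid_units_general :
    Nat.card (leftScalarUnits B) * Nat.card (adjointUnits B) * Nat.card (rightScalarUnits B) =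
      Nat.card ↥(leftScalarUnits B ⊔ adjointUnits B ⊔ rightScalarUnits B) *
        Nat.card (centroidUnits B) :=
  card_mul_card_ker_mul_card (action₀ B) (leftScalarUnits B) (rightScalarUnits B)

end Autotopism

/-- Over a finite field and finite-dimensional spaces,
`card L(B)ˣ * card M(B)ˣ * card R(B)ˣ ≤ card Aut(B) * card C(B)ˣ`, where units of
each algebra are the elements admitting a two-sided inverse inside that algebra. -/
theorem card_units_le_card_autotopism_mul_card_centroid_units
    {K : Type*} [Field K] [Finite K]
    {U₂ U₁ U₀ : Type*}
    [AddCommGroup U₂] [Module K U₂] [FiniteDimensional K U₂]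
    [AddCommGroup U₁] [Module K U₁] [FiniteDimensional K U₁]
    [AddCommGroup U₀] [Module K U₀] [FiniteDimensional K U₀]
    (B : U₂ →ₗ[K] U₁ →ₗ[K] U₀) :
    Nat.card {p : Module.End K U₂ × Module.End K U₀ //
        (∀ (u₂ : U₂) (u₁ : U₁), B (p.1 u₂) u₁ = p.2 (B u₂ u₁)) ∧
        ∃ q : Module.End K U₂ × Module.End K U₀,
          (∀ (u₂ : U₂) (u₁ : U₁), B (q.1 u₂) u₁ = q.2 (B u₂ u₁)) ∧
          p.1 * q.1 = 1 ∧ q.1 * p.1 = 1 ∧ p.2 * q.2 = 1 ∧ q.2 * p.2 = 1} *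
    Nat.card {p : Module.End K U₂ × Module.End K U₁ //
        (∀ (u₂ : U₂) (u₁ : U₁), B (p.1 u₂) u₁ = B u₂ (p.2 u₁)) ∧
        ∃ q : Module.End K U₂ × Module.End K U₁,
          (∀ (u₂ : U₂) (u₁ : U₁), B (q.1 u₂) u₁ = B u₂ (q.2 u₁)) ∧
          p.1 * q.1 = 1 ∧ q.1 * p.1 = 1 ∧ p.2 * q.2 = 1 ∧ q.2 * p.2 = 1} *
    Nat.card {p : Module.End K U₁ × Module.End K U₀ //
        (∀ (u₂ : U₂) (u₁ : U₁), B u₂ (p.1 u₁) = p.2 (B u₂ u₁)) ∧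
        ∃ q : Module.End K U₁ × Module.End K U₀,
          (∀ (u₂ : U₂) (u₁ : U₁), B u₂ (q.1 u₁) = q.2 (B u₂ u₁)) ∧
          p.1 * q.1 = 1 ∧ q.1 * p.1 = 1 ∧ p.2 * q.2 = 1 ∧ q.2 * p.2 = 1} ≤
    Nat.card {f : (U₂ ≃ₗ[K] U₂) × (U₁ ≃ₗ[K] U₁) × (U₀ ≃ₗ[K] U₀) //
        ∀ (u₂ : U₂) (u₁ : U₁), B (f.1 u₂) (f.2.1 u₁) = f.2.2 (B u₂ u₁)} *
    Nat.card {p : Module.End K U₂ × Module.End K U₁ × Module.End K U₀ //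
        (∀ (u₂ : U₂) (u₁ : U₁),
          B (p.1 u₂) u₁ = B u₂ (p.2.1 u₁) ∧ B (p.1 u₂) u₁ = p.2.2 (B u₂ u₁)) ∧
        ∃ q : Module.End K U₂ × Module.End K U₁ × Module.End K U₀,
          (∀ (u₂ : U₂) (u₁ : U₁),
            B (q.1 u₂) u₁ = B u₂ (q.2.1 u₁) ∧ B (q.1 u₂) u₁ = q.2.2 (B u₂ u₁)) ∧
          p.1 * q.1 = 1 ∧ q.1 * p.1 = 1 ∧
          p.2.1 * q.2.1 = 1 ∧ q.2.1 * p.2.1 = 1 ∧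
          p.2.2 * q.2.2 = 1 ∧ q.2.2 * p.2.2 = 1} := by
  have : Finite U₂ := Module.finite_of_finite K
  have : Finite U₁ := Module.finite_of_finite K
  have : Finite U₀ := Module.finite_of_finite K
  have : Finite (U₂ ≃ₗ[K] U₂) := DFunLike.finite _
  have : Finite (U₁ ≃ₗ[K] U₁) := DFunLike.finite _
  have : Finite (U₀ ≃ₗ[K] U₀) := DFunLike.finite _
  rw [← card_leftScalarUnits, ← card_adjointUnits, ← card_rightScalarUnits, ← card_centroidUnits,
    card_units_le_card_autotopism_mul_card_centroid_units_general]
  exact Nat.mul_le_mul_right _ (Subgroup.card_le_card_group _)
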